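/- Let Re_m > 0 and R_H be real numbers, let n = (0,1,0), u = (1,0,0), B = (0,1,0) in ℝ³, and let E ∈ ℝ³ satisfy E × n = 0. If j ∈ ℝ³ satisfies the generalised Ohm's law Re_m⁻¹ j = E + u × B − R_H (j × B), then j × n = (Re_m⁻¹ + Re_m R_H²)⁻¹ · ((Re_m R_H, 0, 1) × n). -/

import Mathlib

open Matrix

/-- Compatible boundary condition for the current density on the moving lid of the
3D lid-driven cavity problem for the Hall MHD equations. -/
theorem stmt_1 (Re_m R_H : ℝ) (hRe : 0 < Re_m)
    (E j : Fin 3 → ℝ)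
    (hEn : crossProduct E ![0, 1, 0] = 0)
    (hOhm : Re_m⁻¹ • j =
      E + crossProduct ![(1:ℝ), 0, 0] ![(0:ℝ), 1, 0]
        - R_H • crossProduct j ![0, 1, 0]) :
    crossProduct j ![0, 1, 0] =
      (Re_m⁻¹ + Re_m * R_H ^ 2)⁻¹ •
        crossProduct ![Re_m * R_H, 0, 1] ![0, 1, 0] := by
  have e0 := congrFun hEn 0
  have e2 := congrFun hEn 2
  have h0 := congrFun hOhm 0
  have h2 := congrFun hOhm 2
  simp [cross_apply] at e0 e2 h0 h2
  change _ = E 0 + _ at h0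
  rw [e2] at h0
  change _ = E 2 + 1 - _ at h2
  rw [e0] at h2
  have hD : 0 < Re_m⁻¹ + Re_m * R_H ^ 2 := by positivity
  have hR : Re_m * Re_m⁻¹ = 1 := mul_inv_cancel₀ hRe.ne'
  have k0 : j 0 = Re_m * R_H * j 2 := by
    linear_combination Re_m * h0 - j 0 * hR
  have k2 : j 2 = (Re_m⁻¹ + Re_m * R_H ^ 2)⁻¹ := by
    apply eq_inv_of_mul_eq_one_left
    rw [k0] at h2
    linear_combination h2
  ext i
  fin_cases i
  · simp [cross_apply, k2]
  · simp [cross_apply]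
  · simp [cross_apply, k0, k2]
    ring
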